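/- arXiv:1211.3692 — 4 statements merged into one kernel-verified Lean document; each statement's English description precedes it below -/
import Mathlib

section
/- Let n be a positive integer, let d be a positive divisor of n, and let ζ′ ∈ ℂ be a root of unity whose multiplicative order is exactly d. Then (−1)^{n − n/d} · ζ′^{n(n−1)/2} = 1. -/
/-- if `d ∣ n` (`n, d > 0`) and `ζ′ ∈ ℂ` has multiplicative order exactly `d`,
then `(−1)^{n − n/d} · ζ′^{n(n−1)/2} = 1`. -/
theorem statement2 (n d : ℕ) (hn : 0 < n) (hd : 0 < d) (hdn : d ∣ n) (ζ' : ℂ)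
    (hζ' : orderOf ζ' = d) :
    (-1 : ℂ) ^ (n - n / d) * ζ' ^ (n * (n - 1) / 2) = 1 := by
  have h1 : ζ' ^ d = 1 := by rw [← hζ']; exact pow_orderOf_eq_one ζ'
  obtain ⟨m, rfl⟩ := hdn
  rw [Nat.mul_div_cancel_left m hd]
  obtain ⟨k, hk⟩ : ∃ k, d * m = k + 1 := ⟨d * m - 1, by omega⟩
  rcases Nat.even_or_odd' d with ⟨e, he | he⟩
  · have he0 : 0 < e := by omega
    have h2 : ζ' ^ e = -1 := by
      have h3 : (ζ' ^ e) ^ 2 = 1 := by rw [← pow_mul, mul_comm, ← he, h1]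
      rcases (mul_self_eq_one_iff.mp ((sq (ζ' ^ e)).symm.trans h3)) with h | h
      · exact absurd (Nat.le_of_dvd he0 (orderOf_dvd_of_pow_eq_one h)) (by omega)
      · exact h
    have h4 : d * m * (d * m - 1) / 2 = e * (m * k) := by
      apply Nat.div_eq_of_eq_mul_left (by norm_num)
      rw [show d * m - 1 = k by omega, he]; ring
    obtain ⟨f, rfl⟩ : ∃ f, e = f + 1 := ⟨e - 1, by omega⟩
    have h5 : d * m - m = m * (2 * f + 1) := by
      apply Nat.sub_eq_of_eq_add; rw [he]; ring
    rw [h4, h5, pow_mul ζ', h2, ← pow_add]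
    apply Even.neg_one_pow
    rw [← mul_add]
    apply Even.mul_left
    have : d * m = 2 * ((f + 1) * m) := by rw [he]; ring
    exact ⟨f + (f + 1) * m, by omega⟩
  · have h5 : d * m - m = 2 * (e * m) := by
      apply Nat.sub_eq_of_eq_add; rw [he]; ring
    have h6 : Even (m * k) := by
      rcases Nat.even_or_odd' m with ⟨a, ha | ha⟩
      · exact Even.mul_right ⟨a, by omega⟩ _
      · refine Even.mul_left ⟨e * m + a, ?_⟩ _
        have h7 : d * m = 2 * (e * m) + m := by rw [he]; ring
        omega
    obtain ⟨r, hr⟩ := h6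
    have h4 : d * m * (d * m - 1) / 2 = d * r := by
      apply Nat.div_eq_of_eq_mul_left (by norm_num)
      rw [show d * m - 1 = k by omega, mul_assoc, hr]; ring
    rw [h4, h5, pow_mul, pow_mul ζ', h1]
    simp
end

section
/- For i = 1, 2 let Ψ_i = (X_i, R_i, Y_i, R_i^∨) be a reduced crystallographic root datum with a choice of simple roots Δ_i = {α_1^{(i)}, …, α_l^{(i)}} ⊆ R_i (so every root of R_i is a ℤ-linear combination of Δ_i with all coefficients of the same sign, and Δ_i is linearly independent). Suppose the Cartan matrices agree: ⟨α_j^{(1)}, (α_i^{(1)})^∨⟩ = ⟨α_j^{(2)}, (α_i^{(2)})^∨⟩ for all 1 ≤ i, j ≤ l. Then the ℤ-linear isomorphism from the root lattice ℤΔ_1 to ℤΔ_2 sending α_i^{(1)} to α_i^{(2)} for each i maps R_1 bijectively onto R_2. (In other words, the Cartan matrix determines the set of roots as linear combinations of the simple roots.) -/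
/-- Key lemma: roots are obtained from simple roots by simple reflections (on coordinates). -/
theorem root_coord_induction {X Y : Type*}
    [AddCommGroup X] [AddCommGroup Y]
    (p : X →ₗ[ℤ] Y →ₗ[ℤ] ℤ)
    (R : Finset X) (Rv : Finset Y) (cor : X → Y)
    (hcor : Set.BijOn cor ↑R ↑Rv)
    (hpair : ∀ α ∈ R, p α (cor α) = 2)
    (hrefl : ∀ α ∈ R, ∀ β ∈ R, β - p β (cor α) • α ∈ R)
    (hcorefl : ∀ α ∈ R, ∀ y ∈ Rv, y - p α y • cor α ∈ Rv)
    (hred : ∀ α ∈ R, ∀ β ∈ R, (∃ n : ℤ, β = n • α) → β = α ∨ β = -α)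
    (l : ℕ)
    (Δ : Fin l → X) (hΔR : ∀ i, Δ i ∈ R) (hΔli : LinearIndependent ℤ Δ)
    (hΔbase : ∀ β ∈ R, ∃ c : Fin l → ℤ,
      β = ∑ i, c i • Δ i ∧ ((∀ i, 0 ≤ c i) ∨ (∀ i, c i ≤ 0)))
    (P : (Fin l → ℤ) → Prop) (hP : ∀ i, P (Pi.single i 1)) (hPneg : ∀ c, P c → P (-c))
    (hPs : ∀ i c, P c → P (c - (∑ j, c j * p (Δ j) (cor (Δ i))) • Pi.single i 1))
    (c : Fin l → ℤ) (hc : ∑ i, c i • Δ i ∈ R) : P c := by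
  classical
  have hinj : ∀ c d : Fin l → ℤ, ∑ i, c i • Δ i = ∑ i, d i • Δ i → c = d := by
    intro c d h
    have := Fintype.linearIndependent_iff.1 hΔli (fun i => c i - d i)
      (by simp [sub_smul, Finset.sum_sub_distrib, h])
    funext i
    have := this i
    omega
  have hneg : ∀ β ∈ R, -β ∈ R := by
    intro β hβ
    have h := hrefl β hβ β hβ
    rw [hpair β hβ, two_smul] at h
    simpa using h
  have hsign : ∀ c : Fin l → ℤ, ∑ i, c i • Δ i ∈ R → ((∀ i, 0 ≤ c i) ∨ (∀ i, c i ≤ 0)) := by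
    intro c hc
    obtain ⟨d, hd, h⟩ := hΔbase _ hc
    rwa [hinj c d hd]
  -- the invariant form
  let B : X → X → ℤ := fun x y => ∑ v ∈ Rv, p x v * p y v
  have hBinv : ∀ α ∈ R, ∀ x y, B (x - p x (cor α) • α) (y - p y (cor α) • α) = B x y := by
    intro α hα x y
    have hα2 := hpair α hα
    have key : ∀ v, (v - p α v • cor α) - p α (v - p α v • cor α) • cor α = v := by
      intro v
      have : p α (v - p α v • cor α) = - p α v := by
        rw [map_sub, map_smul, hα2, smul_eq_mul]; ring
      rw [this, neg_smul]; abel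
    refine Finset.sum_nbij' (fun v => v - p α v • cor α) (fun v => v - p α v • cor α)
      (fun v hv => hcorefl α hα v hv) (fun v hv => hcorefl α hα v hv)
      (fun v _ => key v) (fun v _ => key v) ?_
    intro v _
    simp only [map_sub, map_smul, LinearMap.sub_apply, LinearMap.smul_apply, smul_eq_mul]
    ring
  have hB2 : ∀ α ∈ R, ∀ x, 2 * B x α = p x (cor α) * B α α := by
    intro α hα x
    have h := hBinv α hα x α
    have e : B (x - p x (cor α) • α) (α - p α (cor α) • α)
        = - B x α + p x (cor α) * B α α := by
      simp only [B, Finset.mul_sum]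
      rw [← Finset.sum_neg_distrib, ← Finset.sum_add_distrib]
      refine Finset.sum_congr rfl fun v _ => ?_
      simp only [hpair α hα, map_sub, map_smul, LinearMap.sub_apply, LinearMap.smul_apply,
        smul_eq_mul]
      ring
    linarith
  have hBpos : ∀ α ∈ R, 0 < B α α := by
    intro α hα
    refine Finset.sum_pos' (fun v _ => mul_self_nonneg _) ⟨cor α, hcor.mapsTo hα, ?_⟩
    rw [hpair α hα]; norm_num
  have main : ∀ n : ℕ, ∀ c : Fin l → ℤ, (∀ i, 0 ≤ c i) → ∑ i, c i • Δ i ∈ R →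
      (∑ i, c i) ≤ n → P c := by
    intro n
    induction n with
    | zero =>
      intro c h0 hc hn
      exfalso
      have hz : ∀ i, c i = 0 := by
        have := (Finset.sum_eq_zero_iff_of_nonneg (s := Finset.univ) (f := c)
          (fun i _ => h0 i)).1 (le_antisymm (by simpa using hn)
            (Finset.sum_nonneg fun i _ => h0 i))
        intro i; exact this i (Finset.mem_univ i)
      have := hpair _ hc
      simp [hz] at this
    | succ n ih =>
      intro c h0 hc hn
      set β := ∑ i, c i • Δ i with hβ
      have hsum : B β β = ∑ i, c i * B β (Δ i) := by
        have : ∀ v, p β v = ∑ i, c i * p (Δ i) v := by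
          intro v; simp [hβ, map_sum, LinearMap.sum_apply]
        simp only [B, Finset.mul_sum]
        rw [Finset.sum_comm]
        refine Finset.sum_congr rfl fun v _ => ?_
        conv_lhs => rw [this v, ← this v, mul_comm, this v, Finset.sum_mul]
        refine Finset.sum_congr rfl fun i _ => ?_
        rw [this v]; ring
      obtain ⟨i, -, hi⟩ : ∃ i ∈ Finset.univ, 0 < c i * B β (Δ i) := by
        by_contra! hcon
        have := hBpos β hc
        have := Finset.sum_nonpos hcon
        omega
      have hci : 0 < c i := lt_of_le_of_ne (h0 i) (by rintro h; simp [← h] at hi)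
      have hBi : 0 < B β (Δ i) := by
        exact pos_of_mul_pos_right hi hci.le
      have hm : 0 < p β (cor (Δ i)) := by
        have h1 := hB2 (Δ i) (hΔR i) β
        have h2 := hBpos _ (hΔR i)
        by_contra! hcon
        nlinarith
      set m := p β (cor (Δ i)) with hmdef
      have hmsum : m = ∑ j, c j * p (Δ j) (cor (Δ i)) := by
        simp [hmdef, hβ, map_sum, LinearMap.sum_apply]
      by_cases hall : ∀ j, j ≠ i → c j = 0
      · have hβi : β = c i • Δ i := by
          rw [hβ]
          exact Finset.sum_eq_single i (fun j _ hj => by simp [hall j hj]) (by simp)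
        have hci1 : c = Pi.single i 1 := by
          rcases hred (Δ i) (hΔR i) β hc ⟨_, hβi⟩ with h | h
          · apply hinj
            rw [← hβ, h]
            simp [Pi.single_apply, ite_smul]
          · exfalso
            have : c = Pi.single i (-1) := by
              apply hinj
              rw [← hβ, h]
              simp [Pi.single_apply, ite_smul]
            rw [this] at hci
            simp at hci
        rw [hci1]; exact hP i
      · push Not at hall
        obtain ⟨j, hji, hcj⟩ := hall
        set d : Fin l → ℤ := c - m • Pi.single i 1 with hd
        have hdR : ∑ k, d k • Δ k = β - m • Δ i := by
          simp [hd, sub_smul, Finset.sum_sub_distrib, hβ, Pi.single_apply, ite_smul]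
        have hdmem : ∑ k, d k • Δ k ∈ R := by
          rw [hdR]; exact hrefl _ (hΔR i) _ hc
        have hdj : d j = c j := by simp [hd, hji]
        have hd0 : ∀ k, 0 ≤ d k := by
          rcases hsign d hdmem with h | h
          · exact h
          · have := h j; have := h0 j; omega
        have hds : ∑ k, d k = ∑ k, c k - m := by
          simp [hd, Finset.sum_sub_distrib, Pi.single_apply]
        have hPd : P d := ih d hd0 hdmem (by push_cast at hn; omega)
        have h := hPs i d hPd
        have hdm : ∑ k, d k * p (Δ k) (cor (Δ i)) = -m := by
          have : ∑ k, d k * p (Δ k) (cor (Δ i)) = p (∑ k, d k • Δ k) (cor (Δ i)) := by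
            simp [map_sum, LinearMap.sum_apply]
          rw [this, hdR]
          simp only [map_sub, map_smul, LinearMap.sub_apply, LinearMap.smul_apply, smul_eq_mul,
            hpair _ (hΔR i), ← hmdef]
          ring
        rw [hdm] at h
        have : d - (-m) • Pi.single i 1 = c := by rw [hd, neg_smul]; abel
        rwa [this] at h
  rcases hsign c hc with h | h
  · exact main _ c h hc (Int.self_le_toNat _)
  · have h' := main (∑ i, (-c) i).toNat (-c) (fun i => by simpa using h i)
      (by simpa [Finset.sum_neg_distrib] using hneg _ hc) (Int.self_le_toNat _)
    simpa using hPneg _ h'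

/-- Lemma `CequivLincomb`(a): if two reduced crystallographic root data with
chosen simple roots `Δ₁ = (α_i^{(1)})`, `Δ₂ = (α_i^{(2)})` have the same Cartan matrix, then
the `ℤ`-linear map from the root lattice `ℤΔ₁` sending `α_i^{(1)}` to `α_i^{(2)}` maps
`R₁` bijectively onto `R₂`. -/
theorem statement14
    {X₁ Y₁ X₂ Y₂ : Type*}
    [AddCommGroup X₁] [Module ℤ X₁] [Module.Free ℤ X₁] [Module.Finite ℤ X₁]
    [AddCommGroup Y₁] [Module ℤ Y₁] [Module.Free ℤ Y₁] [Module.Finite ℤ Y₁]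
    [AddCommGroup X₂] [Module ℤ X₂] [Module.Free ℤ X₂] [Module.Finite ℤ X₂]
    [AddCommGroup Y₂] [Module ℤ Y₂] [Module.Free ℤ Y₂] [Module.Finite ℤ Y₂]
    -- perfect pairings
    (p₁ : X₁ →ₗ[ℤ] Y₁ →ₗ[ℤ] ℤ) (p₂ : X₂ →ₗ[ℤ] Y₂ →ₗ[ℤ] ℤ)
    (hp₁ : Function.Bijective p₁) (hp₁' : Function.Bijective p₁.flip)
    (hp₂ : Function.Bijective p₂) (hp₂' : Function.Bijective p₂.flip)
    -- first root datum
    (R₁ : Finset X₁) (R₁v : Finset Y₁) (cor₁ : X₁ → Y₁)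
    (hcor₁ : Set.BijOn cor₁ ↑R₁ ↑R₁v)
    (hpair₁ : ∀ α ∈ R₁, p₁ α (cor₁ α) = 2)
    (hrefl₁ : ∀ α ∈ R₁, ∀ β ∈ R₁, β - p₁ β (cor₁ α) • α ∈ R₁)
    (hcorefl₁ : ∀ α ∈ R₁, ∀ y ∈ R₁v, y - p₁ α y • cor₁ α ∈ R₁v)
    (hred₁ : ∀ α ∈ R₁, ∀ β ∈ R₁, (∃ n : ℤ, β = n • α) → β = α ∨ β = -α)
    -- second root datum
    (R₂ : Finset X₂) (R₂v : Finset Y₂) (cor₂ : X₂ → Y₂)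
    (hcor₂ : Set.BijOn cor₂ ↑R₂ ↑R₂v)
    (hpair₂ : ∀ α ∈ R₂, p₂ α (cor₂ α) = 2)
    (hrefl₂ : ∀ α ∈ R₂, ∀ β ∈ R₂, β - p₂ β (cor₂ α) • α ∈ R₂)
    (hcorefl₂ : ∀ α ∈ R₂, ∀ y ∈ R₂v, y - p₂ α y • cor₂ α ∈ R₂v)
    (hred₂ : ∀ α ∈ R₂, ∀ β ∈ R₂, (∃ n : ℤ, β = n • α) → β = α ∨ β = -α)
    -- chosen simple roots, indexed by `Fin l`
    (l : ℕ)
    (Δ₁ : Fin l → X₁) (hΔ₁R : ∀ i, Δ₁ i ∈ R₁) (hΔ₁li : LinearIndependent ℤ Δ₁)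
    (hΔ₁base : ∀ β ∈ R₁, ∃ c : Fin l → ℤ,
      β = ∑ i, c i • Δ₁ i ∧ ((∀ i, 0 ≤ c i) ∨ (∀ i, c i ≤ 0)))
    (Δ₂ : Fin l → X₂) (hΔ₂R : ∀ i, Δ₂ i ∈ R₂) (hΔ₂li : LinearIndependent ℤ Δ₂)
    (hΔ₂base : ∀ β ∈ R₂, ∃ c : Fin l → ℤ,
      β = ∑ i, c i • Δ₂ i ∧ ((∀ i, 0 ≤ c i) ∨ (∀ i, c i ≤ 0)))
    -- the Cartan matrices agree
    (hcartan : ∀ i j, p₁ (Δ₁ j) (cor₁ (Δ₁ i)) = p₂ (Δ₂ j) (cor₂ (Δ₂ i))) :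
    ∃ φ : Submodule.span ℤ (Set.range Δ₁) →ₗ[ℤ] X₂,
      (∀ i, φ ⟨Δ₁ i, Submodule.subset_span ⟨i, rfl⟩⟩ = Δ₂ i) ∧
      ∀ ψ : Submodule.span ℤ (Set.range Δ₁) →ₗ[ℤ] X₂,
        (∀ i, ψ ⟨Δ₁ i, Submodule.subset_span ⟨i, rfl⟩⟩ = Δ₂ i) →
        Set.BijOn (fun x => ψ x) {x : Submodule.span ℤ (Set.range Δ₁) | (x : X₁) ∈ R₁} ↑R₂ := by
  rename_i _ mX₁ _ _ _ mY₁ _ _ _ mX₂ _ _ _ mY₂ _ _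
  obtain rfl : mX₁ = AddCommGroup.toIntModule X₁ := Subsingleton.elim _ _
  obtain rfl : mY₁ = AddCommGroup.toIntModule Y₁ := Subsingleton.elim _ _
  obtain rfl : mX₂ = AddCommGroup.toIntModule X₂ := Subsingleton.elim _ _
  obtain rfl : mY₂ = AddCommGroup.toIntModule Y₂ := Subsingleton.elim _ _
  classical
  have half : ∀ c : Fin l → ℤ, ∑ i, c i • Δ₁ i ∈ R₁ → ∑ i, c i • Δ₂ i ∈ R₂ := by
    refine root_coord_induction p₁ R₁ R₁v cor₁ hcor₁ hpair₁ hrefl₁ hcorefl₁ hred₁ l Δ₁ hΔ₁R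
      hΔ₁li hΔ₁base (fun c => ∑ i, c i • Δ₂ i ∈ R₂) ?_ ?_ ?_
    · intro i
      simpa [Pi.single_apply, ite_smul] using hΔ₂R i
    · intro c hc
      have h := hrefl₂ _ hc _ hc
      rw [hpair₂ _ hc, two_smul] at h
      simpa [Finset.sum_neg_distrib] using h
    · intro i c hc
      have h := hrefl₂ _ (hΔ₂R i) _ hc
      convert h using 1
      simp [sub_smul, Finset.sum_sub_distrib, Pi.single_apply, ite_smul, map_sum,
        LinearMap.sum_apply, hcartan]
  have half' : ∀ c : Fin l → ℤ, ∑ i, c i • Δ₂ i ∈ R₂ → ∑ i, c i • Δ₁ i ∈ R₁ := by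
    refine root_coord_induction p₂ R₂ R₂v cor₂ hcor₂ hpair₂ hrefl₂ hcorefl₂ hred₂ l Δ₂ hΔ₂R
      hΔ₂li hΔ₂base (fun c => ∑ i, c i • Δ₁ i ∈ R₁) ?_ ?_ ?_
    · intro i
      simpa [Pi.single_apply, ite_smul] using hΔ₁R i
    · intro c hc
      have h := hrefl₁ _ hc _ hc
      rw [hpair₁ _ hc, two_smul] at h
      simpa [Finset.sum_neg_distrib] using h
    · intro i c hc
      have h := hrefl₁ _ (hΔ₁R i) _ hc
      convert h using 1
      simp [sub_smul, Finset.sum_sub_distrib, Pi.single_apply, ite_smul, map_sum,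
        LinearMap.sum_apply, hcartan]
  let b := Module.Basis.span hΔ₁li
  have hb : ∀ i, b i = ⟨Δ₁ i, Submodule.subset_span ⟨i, rfl⟩⟩ := fun i =>
    Subtype.ext (by simp [b, Module.Basis.span_apply])
  refine ⟨b.constr ℤ Δ₂, fun i => by rw [← hb, Module.Basis.constr_basis], ?_⟩
  intro ψ hψ
  have hx1 : ∀ x : Submodule.span ℤ (Set.range Δ₁), (x : X₁) = ∑ i, b.repr x i • Δ₁ i := by
    intro x
    have h := congrArg Subtype.val (b.sum_repr x)
    simp only [hb] at h
    rw [← h]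
    simp
  have hx2 : ∀ x, ψ x = ∑ i, b.repr x i • Δ₂ i := by
    intro x
    conv_lhs => rw [← b.sum_repr x]
    simp only [map_sum, map_smul, hb, hψ]
  refine ⟨?_, ?_, ?_⟩
  · intro x hx
    have hx : (x : X₁) ∈ R₁ := hx
    rw [hx1] at hx
    show ψ x ∈ R₂
    rw [hx2]
    exact half _ hx
  · intro x _ y _ h
    have h : ψ x = ψ y := h
    rw [hx2, hx2, ← sub_eq_zero, ← Finset.sum_sub_distrib] at h
    simp only [← sub_smul] at h
    have h3 := Fintype.linearIndependent_iff.1 hΔ₂li _ h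
    apply b.repr.injective
    ext i
    have := h3 i
    omega
  · intro β hβ
    obtain ⟨c, hc, -⟩ := hΔ₂base β hβ
    have hβ : β ∈ R₂ := hβ
    refine ⟨∑ i, c i • b i, ?_, ?_⟩
    · have := half' c (hc ▸ hβ)
      show ((∑ i, c i • b i : Submodule.span ℤ (Set.range Δ₁)) : X₁) ∈ R₁
      simpa [hb] using this
    · simp only [map_sum, map_smul, hb, hψ, hc]
end

section
/- Let G̃ and G be groups, π : G̃ → G a surjective group homomorphism whose kernel K is contained in the center of G̃, F̃ : G̃ → G̃ a group homomorphism, and F : G → G a group homomorphism with F ∘ π = π ∘ F̃. Then the image under π of the fixed-point subgroup G̃^{F̃} = { x ∈ G̃ : F̃(x) = x } is a normal subgroup of the fixed-point subgroup G^F = { g ∈ G : F(g) = g }. -/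
/-- The fixed-point subgroup `G^F = { g : G | F g = g }` of a group endomorphism `F`. -/
def fixedSubgroup {G : Type*} [Group G] (F : G →* G) : Subgroup G where
  carrier := {g : G | F g = g}
  one_mem' := map_one F
  mul_mem' := by
    intro a b (ha : F a = a) (hb : F b = b)
    show F (a * b) = a * b
    rw [map_mul, ha, hb]
  inv_mem' := by
    intro a (ha : F a = a)
    show F a⁻¹ = a⁻¹
    rw [map_inv, ha]

/-- part of Lemma `lemma:finfactor`: if `π : G̃ → G` is surjective with
central kernel, `F̃ : G̃ → G̃` and `F : G → G` satisfy `F ∘ π = π ∘ F̃`, then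
`π(G̃^{F̃})` is a normal subgroup of `G^F`. -/
theorem statement15 {Gt G : Type*} [Group Gt] [Group G] (π : Gt →* G)
    (hsurj : Function.Surjective π) (hker : π.ker ≤ Subgroup.center Gt)
    (Ft : Gt →* Gt) (F : G →* G) (hcomm : ∀ x : Gt, F (π x) = π (Ft x)) :
    ((fixedSubgroup Ft).map π ≤ fixedSubgroup F) ∧
      (((fixedSubgroup Ft).map π).subgroupOf (fixedSubgroup F)).Normal := by
  constructor
  · rintro _ ⟨x, hx, rfl⟩
    have hx' : Ft x = x := hx
    show F (π x) = π x
    rw [hcomm, hx']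
  · constructor
    rintro ⟨n, hn⟩ hmem ⟨g, hg⟩
    rw [Subgroup.mem_subgroupOf] at hmem ⊢
    obtain ⟨x, hx, hxn⟩ := hmem
    have hx' : Ft x = x := hx
    have hxn' : π x = n := hxn
    obtain ⟨y, rfl⟩ := hsurj g
    have hg' : F (π y) = π y := hg
    have hz : y⁻¹ * Ft y ∈ π.ker := by
      rw [MonoidHom.mem_ker, map_mul, map_inv, ← hcomm, hg', inv_mul_cancel]
    have hc := Subgroup.mem_center_iff.mp (hker hz) x
    refine ⟨y * x * y⁻¹, ?_, ?_⟩
    · show Ft (y * x * y⁻¹) = y * x * y⁻¹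
      rw [map_mul, map_mul, map_inv, hx']
      have h2 : Ft y * x = y * x * y⁻¹ * Ft y := by
        calc Ft y * x = y * (y⁻¹ * Ft y * x) := by group
          _ = y * (x * (y⁻¹ * Ft y)) := by rw [hc]
          _ = y * x * y⁻¹ * Ft y := by group
      rw [h2, mul_inv_cancel_right]
    · show π (y * x * y⁻¹) = π y * n * (π y)⁻¹
      rw [map_mul, map_mul, map_inv, hxn']
end

section
/- Let k be an algebraically closed field of characteristic p > 0, let G be a finite group, and let H be a normal subgroup of G whose index [G : H] is prime to p. Let U be a Sylow p-subgroup of G (so U ≤ H), and let V be a finite-dimensional irreducible kG-module. Assume that the subspace V^U = { v ∈ V : u·v = v for all u ∈ U } of U-fixed vectors is one-dimensional. Then the restriction of V to H is an irreducible kH-module. -/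
open Representation

theorem exists_fixed_aux {k : Type*} [Field k] (p : ℕ) [Fact p.Prime] [CharP k p]
    {P : Type*} [Group P] [Finite P] (hP : IsPGroup p P)
    {V : Type*} [AddCommGroup V] [Module k V] (ρ : Representation k P V)
    (W : Submodule k V) (hW : ∀ g, ∀ v ∈ W, ρ g v ∈ W) (hne : W ≠ ⊥) :
    ∃ v ∈ W, v ≠ 0 ∧ ∀ g, ρ g v = v := by
  obtain ⟨w, hw, hw0⟩ := Submodule.exists_mem_ne_zero_of_ne_bot hne
  let A : AddSubgroup V := AddSubgroup.closure (Set.range fun g => ρ g w)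
  have hpV : ∀ v : V, p • v = 0 := by
    intro v
    rw [← Nat.cast_smul_eq_nsmul k, CharP.cast_eq_zero, zero_smul]
  have hAW : A ≤ W.toAddSubgroup := by
    refine (AddSubgroup.closure_le _).2 ?_
    rintro _ ⟨g, rfl⟩
    exact hW g w hw
  have hA : ∀ g, ∀ v ∈ A, ρ g v ∈ A := by
    intro g
    have : A ≤ A.comap (ρ g).toAddMonoidHom := by
      refine (AddSubgroup.closure_le _).2 ?_
      rintro _ ⟨h, rfl⟩
      exact AddSubgroup.subset_closure ⟨g * h, by simp⟩
    exact this
  have hwA : w ∈ A := AddSubgroup.subset_closure ⟨1, by simp⟩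
  have hfg : AddGroup.FG A :=
    (AddGroup.fg_iff_addSubgroup_fg A).2 ((AddSubgroup.fg_iff A).2 ⟨_, rfl, Set.finite_range _⟩)
  have hfin : Finite A := by
    have : Module.Finite ℤ A := Module.Finite.iff_addGroup_fg.mpr hfg
    refine Module.finite_of_fg_torsion A ?_
    intro x
    refine ⟨⟨(p : ℤ), mem_nonZeroDivisors_of_ne_zero
      (by exact_mod_cast (Fact.out : p.Prime).ne_zero)⟩, ?_⟩
    apply Subtype.ext
    simpa [Submonoid.smul_def] using hpV x
  let act : MulAction P A :=
    { smul := fun g a => ⟨ρ g a, hA g a a.2⟩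
      one_smul := fun a => Subtype.ext (by
        change ρ 1 (a : V) = a
        simp)
      mul_smul := fun g h a => Subtype.ext (by
        change ρ (g * h) (a : V) = ρ g (ρ h a)
        simp) }
  have hdvd : p ∣ Nat.card A := by
    have h1 : addOrderOf (⟨w, hwA⟩ : A) = p :=
      addOrderOf_eq_prime (Subtype.ext (hpV w)) (fun h => hw0 (congrArg Subtype.val h))
    have := addOrderOf_dvd_natCard (⟨w, hwA⟩ : A)
    rwa [h1] at this
  obtain ⟨b, hb, hb0⟩ := hP.exists_fixed_point_of_prime_dvd_card_of_fixed_point A hdvd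
    (a := 0) (fun g => Subtype.ext (map_zero (ρ g)))
  exact ⟨b, hAW b.2, fun h => hb0 (Subtype.ext h.symm), fun g => congrArg Subtype.val (hb g)⟩

theorem sylow_le_aux {p : ℕ} {G : Type*} [Group G] [Finite G] (H : Subgroup G) [H.Normal]
    (hindex : Nat.Coprime H.index p) (U : Subgroup G) (hU : IsPGroup p U) : U ≤ H := by
  intro u hu
  obtain ⟨n, hn⟩ := hU ⟨u, hu⟩
  have hn' : u ^ p ^ n = 1 := congrArg Subtype.val hn
  have h1 : orderOf (u : G ⧸ H) ∣ p ^ n := by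
    apply orderOf_dvd_of_pow_eq_one
    rw [← QuotientGroup.mk_pow, hn', QuotientGroup.mk_one]
  have h2 : orderOf (u : G ⧸ H) ∣ H.index := orderOf_dvd_natCard _
  have h3 := Nat.eq_one_of_dvd_coprimes (hindex.pow_right n) h2 h1
  rwa [orderOf_eq_one_iff, QuotientGroup.eq_one_iff] at h3

/-- Proposition `prop:ext`: let `k` be algebraically closed of characteristic
`p > 0`, `G` a finite group, `H ⊴ G` of index prime to `p`, `U` a Sylow `p`-subgroup of `G`,
and `V` a finite-dimensional irreducible `kG`-module whose subspace of `U`-fixed vectors is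
one-dimensional. Then `V` restricted to `H` is an irreducible `kH`-module. -/
theorem statement19 {k : Type*} [Field k] [IsAlgClosed k] (p : ℕ) (hp : 0 < p) [CharP k p]
    {G : Type*} [Group G] [Fintype G] (H : Subgroup G) [H.Normal]
    (hindex : Nat.Coprime H.index p) (U : Sylow p G)
    {V : Type*} [AddCommGroup V] [Module k V] [FiniteDimensional k V]
    (ρ : Representation k G V)
    (hirr : IsSimpleModule (MonoidAlgebra k G) ρ.asModule)
    (hfix : Module.finrank k
      ↥(⨅ u : (U : Subgroup G), LinearMap.eqLocus (ρ u) (LinearMap.id (R := k) (M := V))) = 1) :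
    IsSimpleModule (MonoidAlgebra k H)
      (Representation.asModule (ρ.comp H.subtype : Representation k H V)) := by
  have hpp : Fact p.Prime := ⟨(CharP.char_is_prime_or_zero k p).resolve_right hp.ne'⟩
  have hUH := sylow_le_aux H hindex U U.2
  rw [← irreducible_iff_isSimpleModule_asModule] at hirr ⊢
  set F : Submodule k V :=
    ⨅ u : (U : Subgroup G), LinearMap.eqLocus (ρ u) (LinearMap.id (R := k) (M := V)) with hF
  -- every nonzero `H`-stable subspace contains the `U`-fixed vectors
  have key : ∀ W : Submodule k V, (∀ h ∈ H, ∀ v ∈ W, ρ h v ∈ W) → W ≠ ⊥ → F ≤ W := by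
    intro W hW hne
    obtain ⟨v, hvW, hv0, hv⟩ := exists_fixed_aux p U.2
      (ρ.comp (U : Subgroup G).subtype : Representation k (U : Subgroup G) V) W
      (fun g v hv => hW g (hUH g.2) v hv) hne
    have hvF : v ∈ F := by
      rw [hF, Submodule.mem_iInf]
      exact fun u => hv u
    intro x hx
    obtain ⟨c, hc⟩ := (finrank_eq_one_iff_of_nonzero' (⟨v, hvF⟩ : F)
      (fun h => hv0 (congrArg Subtype.val h))).1 hfix ⟨x, hx⟩
    have hc' : c • v = x := congrArg Subtype.val hc
    exact hc' ▸ W.smul_mem c hvW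
  have hF0 : F ≠ ⊥ := by
    intro h
    rw [h, finrank_bot] at hfix
    exact zero_ne_one hfix
  obtain ⟨f, hfF, hf0⟩ := Submodule.exists_mem_ne_zero_of_ne_bot hF0
  have hnt : Nontrivial (Subrepresentation (ρ.comp H.subtype : Representation k H V)) := by
    refine ⟨⊥, ⊤, fun h => hf0 ?_⟩
    have h' : (⊥ : Submodule k V) = ⊤ := congrArg Subrepresentation.toSubmodule h
    have : f ∈ (⊤ : Submodule k V) := trivial
    rw [← h'] at this
    exact this
  refine ⟨fun W => ?_⟩
  by_cases hWb : W.toSubmodule = ⊥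
  · exact Or.inl (Subrepresentation.toSubmodule_injective hWb)
  right
  let T : Subrepresentation ρ :=
    { toSubmodule := ⨅ g : G, W.toSubmodule.comap (ρ g)
      apply_mem_toSubmodule := by
        intro g v hv
        simp only [Submodule.mem_iInf, Submodule.mem_comap] at hv ⊢
        intro g'
        have := hv (g' * g)
        rwa [map_mul] at this }
  have hinv : ∀ (g : G) (v : V), ρ g (ρ g⁻¹ v) = v := by
    intro g v
    rw [← Module.End.mul_apply, ← map_mul, mul_inv_cancel, map_one, Module.End.one_apply]
  have hfT : f ∈ T.toSubmodule := by
    change f ∈ ⨅ g : G, W.toSubmodule.comap (ρ g)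
    rw [Submodule.mem_iInf]
    intro g
    refine key _ ?_ ?_ hfF
    · intro h hh v hv
      rw [Submodule.mem_comap] at hv ⊢
      have h1 := W.apply_mem_toSubmodule ⟨g * h * g⁻¹, ‹H.Normal›.conj_mem h hh g⟩ hv
      change ρ (g * h * g⁻¹) (ρ g v) ∈ W.toSubmodule at h1
      rwa [← Module.End.mul_apply, ← map_mul, inv_mul_cancel_right, map_mul,
        Module.End.mul_apply] at h1
    · obtain ⟨w, hw, hw0⟩ := Submodule.exists_mem_ne_zero_of_ne_bot hWb
      rw [Submodule.ne_bot_iff]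
      refine ⟨ρ g⁻¹ w, ?_, fun h => hw0 ?_⟩
      · rw [Submodule.mem_comap, hinv]
        exact hw
      · rw [← hinv g w, h, map_zero]
  have hTtop : T = ⊤ := by
    refine (hirr.eq_bot_or_eq_top T).resolve_left fun h => hf0 ?_
    rw [h] at hfT
    exact hfT
  apply Subrepresentation.toSubmodule_injective
  change W.toSubmodule = ⊤
  rw [eq_top_iff]
  intro v _
  have hvT : v ∈ T.toSubmodule := by
    rw [hTtop]
    exact (trivial : v ∈ (⊤ : Submodule k V))
  have := (Submodule.mem_iInf _).1 hvT 1
  rw [Submodule.mem_comap, map_one] at this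
  exact this
end
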